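/- arXiv:1812.00808 — 13 statements merged into one kernel-verified Lean document; each statement's English description precedes it below -/
import Mathlib

section
/- Let s ≥ 1 and K ≥ 0 be integers and let γ^0, …, γ^K ∈ ℝ^s. Then the following are equivalent: (i) for every integer m ≥ 1, every matrix A ∈ ℝ^{m×m} and every vector c ∈ ℝ^m satisfying A𝟙 = c, one has c = Σ_{k=0}^{K} ((γ^k)ᵀ𝟙) · A c^{×k}; (ii) (γ^0)ᵀ𝟙 = 1 and (γ^k)ᵀ𝟙 = 0 for all 1 ≤ k ≤ K. (These are the internal consistency conditions for step predictor-corrector MRI-GARK methods: the coupling abscissa condition c^{F} = Σ_{k≥0} A^{FF} c^{F×k} (γ^k)ᵀ𝟙 holds for every consistent fast Runge–Kutta method if and only if the stated conditions on the γ^k hold.) -/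
/-- Internal consistency conditions for step predictor-corrector MRI-GARK methods. -/
theorem stmt_0 (s K : ℕ) (hs : 1 ≤ s) (γ : Fin (K + 1) → Fin s → ℝ) :
    (∀ (m : ℕ), 1 ≤ m → ∀ (A : Matrix (Fin m) (Fin m) ℝ) (c : Fin m → ℝ),
        A.mulVec (fun _ => (1 : ℝ)) = c →
        c = ∑ k : Fin (K + 1), (∑ i, γ k i) • A.mulVec (fun i => c i ^ (k : ℕ)))
    ↔ ((∑ i, γ 0 i) = 1 ∧ ∀ k : Fin (K + 1), 1 ≤ (k : ℕ) → (∑ i, γ k i) = 0) := by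
  constructor
  · intro h
    -- the case m = 1 gives a polynomial identity
    have hp : (Polynomial.X : Polynomial ℝ) =
        ∑ k : Fin (K + 1), Polynomial.C (∑ i, γ k i) * Polynomial.X ^ ((k : ℕ) + 1) := by
      apply Polynomial.funext
      intro x
      have h1 := h 1 le_rfl (fun _ _ => x) (fun _ => x) (by
        funext i
        simp [Matrix.mulVec, dotProduct])
      have h2 := congrFun h1 0
      simp only [Finset.sum_apply, Pi.smul_apply, Matrix.mulVec, dotProduct, smul_eq_mul,
        Finset.univ_unique, Finset.sum_singleton] at h2
      rw [Polynomial.eval_finset_sum]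
      simp only [Polynomial.eval_X, Polynomial.eval_mul, Polynomial.eval_C, Polynomial.eval_pow]
      refine h2.trans (Finset.sum_congr rfl fun k _ => ?_)
      ring
    have hc : ∀ j : Fin (K + 1), (Polynomial.X : Polynomial ℝ).coeff ((j : ℕ) + 1)
        = ∑ i, γ j i := by
      intro j
      rw [hp, Polynomial.finset_sum_coeff, Finset.sum_eq_single j]
      · rw [Polynomial.coeff_C_mul, Polynomial.coeff_X_pow, if_pos rfl, mul_one]
      · intro b _ hb
        rw [Polynomial.coeff_C_mul, Polynomial.coeff_X_pow, if_neg, mul_zero]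
        intro e
        exact hb (Fin.ext (by omega))
      · simp
    refine ⟨?_, fun k hk => ?_⟩
    · rw [← hc 0]
      simp
    · rw [← hc k, Polynomial.coeff_X, if_neg (by omega)]
  · rintro ⟨h0, h1⟩ m _ A c hc
    rw [Finset.sum_eq_single 0]
    · rw [h0, one_smul]
      simp [hc]
    · intro b _ hb
      rw [h1 b (by
        have : (b : ℕ) ≠ 0 := fun e => hb (Fin.ext (by simpa using e))
        omega), zero_smul]
    · simp
end

section
/- Let s ≥ 1 and K ≥ 0 be integers, let δc, c̄ ∈ ℝ^s, and let Γ^0, …, Γ^K, Ψ^0, …, Ψ^K ∈ ℝ^{s×s}. Let L ∈ ℝ^{s×s} be the lower shift matrix (L_{i,j} = 1 if i = j+1 and 0 otherwise). Then the following are equivalent: (i) for every integer m ≥ 1, every matrix A ∈ ℝ^{m×m} and vector c ∈ ℝ^m with A𝟙 = c, one has L c̄ ⊗ 𝟙_m + δc ⊗ c = L c̄ ⊗ 𝟙_m + Σ_{k=0}^{K} ((Ψ^k + Γ^k)𝟙) ⊗ (A c^{×k}); (ii) (Ψ^0 + Γ^0)𝟙 = δc and (Ψ^k + Γ^k)𝟙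 = 0 for all 1 ≤ k ≤ K. (These are the internal consistency conditions for internal stage predictor-corrector MRI-GARK methods.) -/
theorem coeffs_of_eval (K : ℕ) (d : ℝ) (v : Fin (K + 1) → ℝ)
    (h : ∀ a : ℝ, d * a = ∑ k : Fin (K + 1), v k * (a * a ^ (k : ℕ))) :
    v 0 = d ∧ ∀ k : Fin (K + 1), 1 ≤ (k : ℕ) → v k = 0 := by
  have hp : (Polynomial.C d * Polynomial.X ^ 1 : Polynomial ℝ)
      = ∑ k : Fin (K + 1), Polynomial.C (v k) * Polynomial.X ^ ((k : ℕ) + 1) := by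
    apply Polynomial.funext
    intro a
    simp only [Polynomial.eval_finsetSum, Polynomial.eval_mul, Polynomial.eval_C,
      Polynomial.eval_pow, Polynomial.eval_X, pow_one]
    rw [h a]
    exact Finset.sum_congr rfl fun k _ => by ring
  have hc : ∀ j : Fin (K + 1), (if (j : ℕ) = 0 then d else 0) = v j := by
    intro j
    have := congrArg (fun p => Polynomial.coeff p ((j : ℕ) + 1)) hp
    simp only [Polynomial.finsetSum_coeff, Polynomial.coeff_C_mul_X_pow, add_left_inj,
      Nat.add_eq_right, Fin.val_inj, Finset.sum_ite_eq, Finset.mem_univ, if_true] at this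
    exact this
  refine ⟨?_, fun k hk => ?_⟩
  · simpa using (hc 0).symm
  · rw [← hc k, if_neg (by omega)]

/-- Internal consistency conditions for internal stage predictor-corrector MRI-GARK methods. -/
theorem stmt_1 (s K : ℕ) (hs : 1 ≤ s) (δc cbar : Fin s → ℝ)
    (Γ Ψ : Fin (K + 1) → Matrix (Fin s) (Fin s) ℝ)
    (L : Matrix (Fin s) (Fin s) ℝ)
    (hL : ∀ i j : Fin s, L i j = if (i : ℕ) = (j : ℕ) + 1 then 1 else 0) :
    (∀ (m : ℕ), 1 ≤ m → ∀ (A : Matrix (Fin m) (Fin m) ℝ) (c : Fin m → ℝ),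
        A.mulVec (fun _ => (1 : ℝ)) = c →
        (fun p : Fin s × Fin m => L.mulVec cbar p.1 * 1 + δc p.1 * c p.2)
          = (fun p : Fin s × Fin m => L.mulVec cbar p.1 * 1 +
              ∑ k : Fin (K + 1), ((Ψ k + Γ k).mulVec (fun _ => (1 : ℝ))) p.1 *
                (A.mulVec (fun i => c i ^ (k : ℕ))) p.2))
    ↔ ((Ψ 0 + Γ 0).mulVec (fun _ => (1 : ℝ)) = δc ∧
        ∀ k : Fin (K + 1), 1 ≤ (k : ℕ) → (Ψ k + Γ k).mulVec (fun _ => (1 : ℝ)) = 0) := by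
  constructor
  · intro h
    have key : ∀ i : Fin s, _ := fun i =>
      coeffs_of_eval K (δc i) (fun k => ((Ψ k + Γ k).mulVec (fun _ => (1 : ℝ))) i) (by
        intro a
        have h1 := congrFun (h 1 le_rfl (fun _ _ => a) (fun _ => a)
          (by ext; simp [Matrix.mulVec, dotProduct])) (i, 0)
        have h2 := add_left_cancel h1
        simpa [Matrix.mulVec, dotProduct] using h2)
    exact ⟨funext fun i => (key i).1, fun k hk => funext fun i => (key i).2 k hk⟩
  · rintro ⟨h0, h1⟩ m _ A c hc
    funext p
    congr 1
    rw [Finset.sum_eq_single 0]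
    · rw [h0]
      simp [hc]
    · intro k _ hk
      rw [h1 k (Nat.one_le_iff_ne_zero.mpr fun h => hk (Fin.ext h))]
      simp
    · simp
end

section
/- Let H > 0, λ ∈ ℂ, K ∈ ℕ, let g₀, …, g_K ∈ ℂ^d, and let v : ℝ → ℂ^d be differentiable on [0, H] with v′(θ) = λ v(θ) + Σ_{k=0}^K (θ/H)^k g_k for all θ ∈ [0, H]. Then v(H) = e^{λH} v(0) + H Σ_{k=0}^K φ_{k+1}(λH) g_k. (This is the exact-solution formula for the modified fast ODEs with polynomial slow forcing that underlies the stability functions of multirate infinitesimal GARK methods.) -/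
/-- The φ-functions: φ₀(z) = e^z and φ_{k+1}(z) = ∫₀¹ e^{z(1−t)} t^k dt. -/
noncomputable def phi (k : ℕ) (z : ℂ) : ℂ :=
  match k with
  | 0 => Complex.exp z
  | k + 1 => ∫ t in (0:ℝ)..1, Complex.exp (z * (1 - (t : ℂ))) * (t : ℂ) ^ k

/-- Exact-solution formula for the modified fast ODE with polynomial slow forcing. -/
theorem stmt_5 (d : ℕ) (H : ℝ) (hH : 0 < H) (lam : ℂ) (K : ℕ)
    (g : Fin (K + 1) → Fin d → ℂ) (v : ℝ → Fin d → ℂ)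
    (hv : ∀ θ ∈ Set.Icc (0 : ℝ) H,
      HasDerivWithinAt v
        (lam • v θ + ∑ k : Fin (K + 1), ((((θ / H) ^ (k : ℕ) : ℝ)) : ℂ) • g k)
        (Set.Icc 0 H) θ) :
    v H = Complex.exp (lam * H) • v 0 +
      (H : ℂ) • ∑ k : Fin (K + 1), phi ((k : ℕ) + 1) (lam * H) • g k := by
  ext i
  have hphi : ∀ k : ℕ, ∫ θ in (0:ℝ)..H,
      Complex.exp (lam * ((H : ℂ) - (θ : ℂ))) * (((θ / H) ^ k : ℝ) : ℂ)
        = (H : ℂ) * phi (k + 1) (lam * H) := by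
    intro k
    have hne : (H : ℂ) ≠ 0 := by exact_mod_cast hH.ne'
    have h := intervalIntegral.integral_comp_div (a := 0) (b := H)
      (fun t : ℝ => Complex.exp (lam * H * (1 - (t : ℂ))) * (t : ℂ) ^ k) hH.ne'
    rw [zero_div, div_self hH.ne', Complex.real_smul] at h
    simp only [phi]
    rw [← h]
    congr 1
    ext θ
    push_cast
    congr 2
    field_simp
  have hvi : ∀ θ ∈ Set.Icc (0 : ℝ) H, HasDerivWithinAt (fun θ => v θ i)
      (lam * v θ i + ∑ k : Fin (K + 1), ((((θ / H) ^ (k : ℕ) : ℝ)) : ℂ) * g k i)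
      (Set.Icc 0 H) θ := by
    intro θ hθ
    have h := (hasDerivWithinAt_pi.1 (hv θ hθ)) i
    simpa [Finset.sum_apply] using h
  have hE : ∀ θ : ℝ, HasDerivAt (fun θ : ℝ => Complex.exp (lam * ((H : ℂ) - (θ : ℂ))))
      (Complex.exp (lam * ((H : ℂ) - (θ : ℂ))) * (lam * (-1))) θ := by
    intro θ
    have h1 : HasDerivAt (fun θ : ℝ => (θ : ℂ)) 1 θ := Complex.ofRealCLM.hasDerivAt
    exact ((h1.const_sub (H : ℂ)).const_mul lam).cexp
  have hw : ∀ θ ∈ Set.Icc (0 : ℝ) H, HasDerivWithinAt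
      (fun θ : ℝ => Complex.exp (lam * ((H : ℂ) - (θ : ℂ))) * v θ i)
      (∑ k : Fin (K + 1), Complex.exp (lam * ((H : ℂ) - (θ : ℂ))) *
        ((((θ / H) ^ (k : ℕ) : ℝ)) : ℂ) * g k i)
      (Set.Icc 0 H) θ := by
    intro θ hθ
    refine ((hE θ).hasDerivWithinAt.mul (hvi θ hθ)).congr_deriv ?_
    simp only [mul_assoc, ← Finset.mul_sum]
    ring
  have hint : ∀ k : Fin (K + 1), IntervalIntegrable (fun θ : ℝ =>
      Complex.exp (lam * ((H : ℂ) - (θ : ℂ))) * ((((θ / H) ^ (k : ℕ) : ℝ)) : ℂ) * g k i)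
      MeasureTheory.volume 0 H := by
    intro k
    apply Continuous.intervalIntegrable
    fun_prop
  have key := intervalIntegral.integral_eq_sub_of_hasDerivAt_of_le hH.le
    (fun θ hθ => (hw θ hθ).continuousWithinAt)
    (fun θ hθ => (hw θ (Set.Ioo_subset_Icc_self hθ)).hasDerivAt (Icc_mem_nhds hθ.1 hθ.2))
    (by
      apply Continuous.intervalIntegrable
      fun_prop)
  rw [intervalIntegral.integral_finsetSum (fun k _ => hint k)] at key
  simp only [intervalIntegral.integral_mul_const, hphi] at key
  simp only [sub_self, mul_zero, Complex.exp_zero, one_mul, Complex.ofReal_zero, sub_zero,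
    mul_assoc, ← Finset.mul_sum] at key
  simp only [Pi.add_apply, Pi.smul_apply, Finset.sum_apply, smul_eq_mul]
  rw [key]
  ring
end

section
/- Let H > 0, λ ∈ ℂ, K ∈ ℕ, let a, b₀, …, b_K ∈ ℂ^d, and let v : ℝ → ℂ^d be differentiable on [0, H] with v′(θ) = λ v(θ) + a + Σ_{k=0}^K (1/(k+1)) (θ/H)^{k+1} b_k for all θ ∈ [0, H]. Then v(H) = e^{λH} v(0) + H φ₁(λH) a + H Σ_{k=0}^K (φ_{k+2}(λH)/(k+1)) b_k. (This formula, with the coefficients μ̃ and ν̃ built from φ_{k+2}/(k+1), underlies the matrix stability analysis of coupled MRI-GARK methods.) -/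
theorem integral_eq_phi (H : ℝ) (hH : 0 < H) (lam : ℂ) (n : ℕ) :
    ∫ θ in (0:ℝ)..H, Complex.exp (lam * ((H : ℂ) - θ)) * ((θ / H : ℝ) : ℂ) ^ n
      = (H : ℂ) * phi (n + 1) (lam * H) := by
  have hH' : (H : ℂ) ≠ 0 := by exact_mod_cast hH.ne'
  have h := intervalIntegral.integral_comp_div (a := 0) (b := H)
    (fun t : ℝ => Complex.exp (lam * H * (1 - (t : ℂ))) * (t : ℂ) ^ n) hH.ne'
  rw [zero_div, div_self hH.ne', Complex.real_smul] at h
  unfold phi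
  rw [← h]
  congr 1
  ext θ
  congr 2
  push_cast
  field_simp

/-- Exact-solution formula underlying the matrix stability analysis of coupled
MRI-GARK methods. -/
theorem stmt_6 (d : ℕ) (H : ℝ) (hH : 0 < H) (lam : ℂ) (K : ℕ)
    (a : Fin d → ℂ) (b : Fin (K + 1) → Fin d → ℂ) (v : ℝ → Fin d → ℂ)
    (hv : ∀ θ ∈ Set.Icc (0 : ℝ) H,
      HasDerivWithinAt v
        (lam • v θ + a + ∑ k : Fin (K + 1),
          (((1 / ((k : ℕ) + 1) * (θ / H) ^ ((k : ℕ) + 1) : ℝ)) : ℂ) • b k)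
        (Set.Icc 0 H) θ) :
    v H = Complex.exp (lam * H) • v 0 + ((H : ℂ) * phi 1 (lam * H)) • a +
      (H : ℂ) • ∑ k : Fin (K + 1),
        (phi ((k : ℕ) + 2) (lam * H) / ((k : ℕ) + 1)) • b k := by
  ext i
  have hvi : ∀ θ ∈ Set.Icc (0 : ℝ) H, HasDerivWithinAt (fun t => v t i)
      (lam * v θ i + a i + ∑ k : Fin (K + 1),
          (((1 / ((k : ℕ) + 1) * (θ / H) ^ ((k : ℕ) + 1) : ℝ)) : ℂ) * b k i)
        (Set.Icc 0 H) θ := by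
    intro θ hθ
    have := (hasDerivWithinAt_pi.1 (hv θ hθ)) i
    simpa [Finset.sum_apply] using this
  let E : ℝ → ℂ := fun θ => Complex.exp (lam * ((H : ℂ) - θ))
  have hE : ∀ θ : ℝ, HasDerivAt E (E θ * (-lam)) θ := by
    intro θ
    have h1 : HasDerivAt (fun t : ℝ => lam * ((H : ℂ) - (t : ℂ))) (lam * (-1)) θ :=
      ((Complex.ofRealCLM.hasDerivAt (x := θ)).const_sub (H : ℂ)).const_mul lam
    have h2 := h1.cexp
    simpa [E] using h2
  have hEc : Continuous E := by fun_prop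
  let g : ℝ → ℂ := fun θ => (E θ * ((θ / H : ℝ) : ℂ) ^ 0) * a i + ∑ k : Fin (K + 1),
      (E θ * ((θ / H : ℝ) : ℂ) ^ ((k : ℕ) + 1)) * (b k i / ((k : ℕ) + 1))
  have hw : ∀ θ ∈ Set.Icc (0 : ℝ) H, HasDerivWithinAt (fun t => E t * v t i) (g θ)
      (Set.Icc 0 H) θ := by
    intro θ hθ
    refine ((hE θ).hasDerivWithinAt.mul (hvi θ hθ)).congr_deriv ?_
    have : ∑ k : Fin (K + 1),
        (E θ * ((θ / H : ℝ) : ℂ) ^ ((k : ℕ) + 1)) * (b k i / ((k : ℕ) + 1))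
        = E θ * ∑ k : Fin (K + 1),
          (((1 / ((k : ℕ) + 1) * (θ / H) ^ ((k : ℕ) + 1) : ℝ)) : ℂ) * b k i := by
      rw [Finset.mul_sum]
      refine Finset.sum_congr rfl fun k _ => ?_
      push_cast
      ring
    simp only [g]
    rw [this]
    ring
  have hgc : Continuous g := by fun_prop
  have hF := intervalIntegral.integral_eq_sub_of_hasDerivAt_of_le hH.le
    (fun θ hθ => (hw θ hθ).continuousWithinAt)
    (fun θ hθ => (hw θ ⟨hθ.1.le, hθ.2.le⟩).hasDerivAt (Icc_mem_nhds hθ.1 hθ.2))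
    (hgc.intervalIntegrable 0 H)
  have hI : ∫ θ in (0:ℝ)..H, g θ = ((H : ℂ) * phi 1 (lam * H)) * a i +
      ∑ k : Fin (K + 1), ((H : ℂ) * phi ((k : ℕ) + 2) (lam * H)) *
        (b k i / ((k : ℕ) + 1)) := by
    simp only [g]
    rw [intervalIntegral.integral_add
      (Continuous.intervalIntegrable (by fun_prop) _ _)
      (Continuous.intervalIntegrable (by fun_prop) _ _),
      intervalIntegral.integral_finsetSum
        (fun k _ => Continuous.intervalIntegrable (by fun_prop) _ _)]
    simp only [intervalIntegral.integral_mul_const, E]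
    simp only [integral_eq_phi H hH lam]
  rw [hI] at hF
  have e1 : E H = 1 := by simp [E]
  have e0 : E 0 = Complex.exp (lam * H) := by simp [E]
  rw [e1, e0, one_mul] at hF
  simp only [Pi.add_apply, Pi.smul_apply, Finset.sum_apply, smul_eq_mul, Finset.mul_sum]
  have hs : ∑ k : Fin (K + 1), (H : ℂ) * (phi ((k : ℕ) + 2) (lam * H) / ((k : ℕ) + 1) * b k i)
      = ∑ k : Fin (K + 1), ((H : ℂ) * phi ((k : ℕ) + 2) (lam * H)) *
        (b k i / ((k : ℕ) + 1)) :=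
    Finset.sum_congr rfl fun k _ => by ring
  rw [hs]
  linear_combination -hF
end

section
/- Let A ∈ ℝ^{s×s}, let γ_j(t) = Σ_{k=0}^K γ_j^k t^k for j = 1, …, s, let H > 0, λ^F, λ^S ∈ ℂ, and set z^F = Hλ^F, z^S = Hλ^S, z = z^F + z^S. Assume I − zA is invertible. Let y_n ∈ ℂ, set Y = (I − zA)^{−1}𝟙 · y_n ∈ ℂ^s, and let v : ℝ → ℂ be differentiable on [0, H] with v(0) = y_n and v′(θ) = λ^F v(θ) + λ^S Σ_{j=1}^s γ_j(θ/H) Y_j for all θ ∈ [0, H]. Then v(H) = R(z^F, z^S) · y_n, where R(z^F, z^S) = φ₀(z^F) + z^S μ(z^F)ᵀ (I − zA)^{−1}𝟙. (This is the scalar linear stability function of a step predictor-corrector MRI-GARK method applied to y′ = λ^F y + λ^S y.) -/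
/-- Scalar linear stability function of a step predictor-corrector MRI-GARK method
applied to y′ = λ^F y + λ^S y. -/
theorem stmt_7 (s K : ℕ) (hs : 1 ≤ s) (A : Matrix (Fin s) (Fin s) ℝ)
    (γ : Fin s → Fin (K + 1) → ℝ) (H : ℝ) (hH : 0 < H) (lamF lamS : ℂ)
    (zF zS z : ℂ) (hzF : zF = H * lamF) (hzS : zS = H * lamS) (hz : z = zF + zS)
    (hinv : IsUnit (1 - z • A.map (Complex.ofReal)).det)
    (yn : ℂ) (Y : Fin s → ℂ)
    (hY : Y = yn • (1 - z • A.map (Complex.ofReal))⁻¹.mulVec (fun _ => 1))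
    (v : ℝ → ℂ) (hv0 : v 0 = yn)
    (hv : ∀ θ ∈ Set.Icc (0 : ℝ) H,
      HasDerivWithinAt v
        (lamF * v θ + lamS * ∑ j,
          (∑ k : Fin (K + 1), ((γ j k : ℝ) : ℂ) * (((θ / H : ℝ)) : ℂ) ^ (k : ℕ)) * Y j)
        (Set.Icc 0 H) θ) :
    v H = (phi 0 zF + zS * ∑ j,
        (∑ k : Fin (K + 1), phi ((k : ℕ) + 1) zF * ((γ j k : ℝ) : ℂ)) *
          ((1 - z • A.map (Complex.ofReal))⁻¹.mulVec (fun _ => 1)) j) * yn := by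
  have hHc : (H : ℂ) ≠ 0 := by exact_mod_cast hH.ne'
  set M := (1 - z • A.map (Complex.ofReal))⁻¹.mulVec (fun _ => (1 : ℂ)) with hM
  let F : ℝ → ℂ := fun t => ∑ j, ∑ k : Fin (K + 1),
    (zS * (γ j k : ℂ) * Y j) * (Complex.exp (zF * (1 - (t : ℂ))) * (t : ℂ) ^ (k : ℕ))
  have hint : ∫ t in (0:ℝ)..1, F t =
      Complex.exp (zF * (1 - ((1 : ℝ) : ℂ))) * v (H * 1)
        - Complex.exp (zF * (1 - ((0 : ℝ) : ℂ))) * v (H * 0) := by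
    have hmaps : ∀ t ∈ Set.Icc (0:ℝ) 1, H * t ∈ Set.Icc (0:ℝ) H := fun t ht =>
      ⟨mul_nonneg hH.le ht.1, by nlinarith [ht.2]⟩
    refine intervalIntegral.integral_eq_sub_of_hasDerivAt_of_le
      (f := fun t : ℝ => Complex.exp (zF * (1 - (t : ℂ))) * v (H * t)) zero_le_one ?_ ?_ ?_
    · have hvc : ContinuousOn v (Set.Icc 0 H) := fun θ hθ => (hv θ hθ).continuousWithinAt
      have h2 : ContinuousOn (fun t : ℝ => v (H * t)) (Set.Icc 0 1) :=
        hvc.comp (by fun_prop) hmaps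
      exact ContinuousOn.mul (by fun_prop) h2
    · intro t ht
      have hmem : H * t ∈ Set.Ioo (0:ℝ) H := ⟨mul_pos hH ht.1, by nlinarith [ht.2]⟩
      have h1 := (hv (H * t) ⟨hmem.1.le, hmem.2.le⟩).hasDerivAt (Icc_mem_nhds hmem.1 hmem.2)
      have h2 : HasDerivAt (fun t : ℝ => H * t) H t := by
        simpa using (hasDerivAt_id t).const_mul H
      have h3 := h1.scomp t h2
      have h4 : HasDerivAt (fun t : ℝ => Complex.exp (zF * (1 - (t : ℂ))))
          (Complex.exp (zF * (1 - (t : ℂ))) * (zF * (-1))) t := by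
        have h5 : HasDerivAt (fun t : ℝ => zF * (1 - (t : ℂ))) (zF * (-1)) t :=
          ((Complex.ofRealCLM.hasDerivAt (x := t)).const_sub 1).const_mul zF
        exact h5.cexp
      have h6 := h4.mul h3
      refine h6.congr_deriv ?_
      have hdiv : H * t / H = t := by field_simp
      simp only [hdiv, F, Function.comp, Complex.real_smul]
      have hF : (∑ j, ∑ k : Fin (K + 1),
          (zS * (γ j k : ℂ) * Y j) * (Complex.exp (zF * (1 - (t : ℂ))) * (t : ℂ) ^ (k : ℕ)))
          = zS * Complex.exp (zF * (1 - (t : ℂ))) *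
            ∑ j, (∑ k : Fin (K + 1), ((γ j k : ℝ) : ℂ) * (t : ℂ) ^ (k : ℕ)) * Y j := by
        simp only [Finset.mul_sum, Finset.sum_mul]
        refine Finset.sum_congr rfl fun j _ => Finset.sum_congr rfl fun k _ => ?_
        ring
      rw [hF, hzS, hzF]
      ring
    · apply Continuous.intervalIntegrable
      fun_prop
  have hint2 : ∫ t in (0:ℝ)..1, F t =
      ∑ j, ∑ k : Fin (K + 1), (zS * (γ j k : ℂ) * Y j) * phi ((k : ℕ) + 1) zF := by
    simp only [F]
    rw [intervalIntegral.integral_finsetSum]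
    · refine Finset.sum_congr rfl fun j _ => ?_
      rw [intervalIntegral.integral_finsetSum]
      · refine Finset.sum_congr rfl fun k _ => ?_
        rw [intervalIntegral.integral_const_mul]
        rfl
      · intro k _
        apply Continuous.intervalIntegrable
        fun_prop
    · intro j _
      apply Continuous.intervalIntegrable
      fun_prop
  rw [hint2] at hint
  simp only [Complex.ofReal_one, Complex.ofReal_zero, sub_self, mul_zero, mul_one, sub_zero,
    Complex.exp_zero, one_mul, hv0] at hint
  have hphi : phi 0 zF = Complex.exp zF := rfl
  have hR : (∑ j, ∑ k : Fin (K + 1), (zS * (γ j k : ℂ) * (yn • M) j) * phi ((k : ℕ) + 1) zF)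
      = zS * (∑ j, (∑ k : Fin (K + 1), phi ((k : ℕ) + 1) zF * ((γ j k : ℝ) : ℂ)) * M j) * yn := by
    simp only [Finset.mul_sum, Finset.sum_mul, Pi.smul_apply, smul_eq_mul]
    refine Finset.sum_congr rfl fun j _ => Finset.sum_congr rfl fun k _ => ?_
    ring
  rw [hY, hR] at hint
  rw [hphi]
  linear_combination -hint
end

section
/- Let A ∈ ℝ^{s×s} be invertible and γ^0, …, γ^K ∈ ℝ^s, and fix z^S ∈ ℂ. Then for all sufficiently negative real x the matrix I − (x + z^S)A is invertible, so that R(x, z^S) = φ₀(x) + z^S μ(x)ᵀ (I − (x + z^S)A)^{−1}𝟙 is defined, and R(x, z^S) → 0 as x → −∞. (Fast stiff limit of the scalar stability function of a step predictor-corrector MRI-GARK method.) -/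
theorem phi_bound (k : ℕ) (x : ℝ) (hx : x ≤ 0) : ‖phi (k + 1) (x : ℂ)‖ ≤ 1 := by
  have h := intervalIntegral.norm_integral_le_of_norm_le_const (a := (0 : ℝ)) (b := 1) (C := 1)
    (f := fun t : ℝ => Complex.exp ((x : ℂ) * (1 - (t : ℂ))) * (t : ℂ) ^ k) (by
      intro t ht
      rw [Set.uIoc_of_le zero_le_one] at ht
      obtain ⟨h0, h1⟩ := ht
      have e : (x : ℂ) * (1 - (t : ℂ)) = ((x * (1 - t) : ℝ) : ℂ) := by push_cast; ring
      rw [norm_mul, e, Complex.norm_exp_ofReal, norm_pow, Complex.norm_real, Real.norm_eq_abs,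
        abs_of_pos h0]
      have a1 : Real.exp (x * (1 - t)) ≤ 1 := by
        rw [Real.exp_le_one_iff]
        exact mul_nonpos_of_nonpos_of_nonneg hx (by linarith)
      have a2 : t ^ k ≤ 1 := pow_le_one₀ h0.le h1
      have a3 : 0 ≤ t ^ k := by positivity
      nlinarith [Real.exp_pos (x * (1 - t))])
  simpa [phi] using h

/-- Fast stiff limit of the scalar stability function of a step
predictor-corrector MRI-GARK method: R(x, z^S) → 0 as x → −∞. -/
theorem stmt_8 (s K : ℕ) (hs : 1 ≤ s) (A : Matrix (Fin s) (Fin s) ℝ)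
    (hA : IsUnit A.det) (γ : Fin (K + 1) → Fin s → ℝ) (zS : ℂ) :
    (∃ x₀ : ℝ, ∀ x : ℝ, x ≤ x₀ →
      IsUnit (1 - ((x : ℂ) + zS) • A.map Complex.ofReal).det) ∧
    Filter.Tendsto
      (fun x : ℝ => phi 0 (x : ℂ) + zS * ∑ j,
        (∑ k : Fin (K + 1), phi ((k : ℕ) + 1) (x : ℂ) * ((γ k j : ℝ) : ℂ)) *
          ((1 - ((x : ℂ) + zS) • A.map Complex.ofReal)⁻¹.mulVec (fun _ => 1)) j)
      Filter.atBot (nhds 0) := by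
  set B : Matrix (Fin s) (Fin s) ℂ := A.map Complex.ofReal with hB
  have hBdet : B.det ≠ 0 := by
    have h1 : B.det = ((A.det : ℝ) : ℂ) := (RingHom.map_det Complex.ofRealHom A).symm
    rw [h1]
    exact_mod_cast hA.ne_zero
  have hz : Filter.Tendsto (fun x : ℝ => (x : ℂ) + zS) Filter.atBot (Bornology.cobounded ℂ) := by
    rw [← tendsto_norm_atTop_iff_cobounded]
    refine Filter.tendsto_atTop_mono (f := fun x : ℝ => |x| - ‖zS‖) ?_ ?_
    · intro x
      have := norm_sub_norm_le (x : ℂ) (-zS)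
      simpa using this
    · exact Filter.tendsto_atTop_add_const_right _ _ Filter.tendsto_abs_atBot_atTop
  have hw : Filter.Tendsto (fun x : ℝ => ((x : ℂ) + zS)⁻¹) Filter.atBot (nhds 0) :=
    Filter.tendsto_inv₀_cobounded.comp hz
  have hz0 : ∀ᶠ x : ℝ in Filter.atBot, (x : ℂ) + zS ≠ 0 :=
    hz.eventually (Bornology.eventually_ne_cobounded 0)
  have hdc : Continuous (fun w : ℂ => (B - w • (1 : Matrix (Fin s) (Fin s) ℂ)).det) := by
    fun_prop
  have hac : Continuous (fun w : ℂ => (B - w • (1 : Matrix (Fin s) (Fin s) ℂ)).adjugate) := by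
    apply Continuous.matrix_adjugate
    fun_prop
  have hd : ∀ᶠ x : ℝ in Filter.atBot,
      (B - ((x : ℂ) + zS)⁻¹ • (1 : Matrix (Fin s) (Fin s) ℂ)).det ≠ 0 := by
    have h1 := (hdc.tendsto 0).comp hw
    exact h1.eventually_ne (by simpa using hBdet)
  have hinv : ∀ᶠ x : ℝ in Filter.atBot,
      (1 - ((x : ℂ) + zS) • B) *
        ((-((x : ℂ) + zS)⁻¹) • ((B - ((x : ℂ) + zS)⁻¹ • (1 : Matrix (Fin s) (Fin s) ℂ)).det⁻¹ •
          (B - ((x : ℂ) + zS)⁻¹ • (1 : Matrix (Fin s) (Fin s) ℂ)).adjugate)) = 1 := by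
    filter_upwards [hz0, hd] with x h0 h1
    generalize (x : ℂ) + zS = z at *
    have e : (1 - z • B) = (-z) • (B - z⁻¹ • (1 : Matrix (Fin s) (Fin s) ℂ)) := by
      rw [smul_sub, smul_smul, neg_mul, mul_inv_cancel₀ h0]
      simp
      abel
    rw [e, Matrix.smul_mul, Matrix.mul_smul, Matrix.mul_smul, Matrix.mul_adjugate, smul_smul,
      smul_smul, smul_smul]
    have : -z * -z⁻¹ * ((B - z⁻¹ • (1 : Matrix (Fin s) (Fin s) ℂ)).det⁻¹ *
        (B - z⁻¹ • (1 : Matrix (Fin s) (Fin s) ℂ)).det) = 1 := by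
      rw [inv_mul_cancel₀ h1, neg_mul_neg, mul_inv_cancel₀ h0, one_mul]
    rw [← mul_assoc] at this
    first
      | rw [this, one_smul]
      | (rw [mul_assoc, mul_assoc] ; rw [← mul_assoc, ← mul_assoc, this, one_smul])
  have hlim : Filter.Tendsto (fun x : ℝ => (1 - ((x : ℂ) + zS) • B)⁻¹) Filter.atBot (nhds 0) := by
    have h1 : Filter.Tendsto (fun x : ℝ =>
        ((-((x : ℂ) + zS)⁻¹) • ((B - ((x : ℂ) + zS)⁻¹ • (1 : Matrix (Fin s) (Fin s) ℂ)).det⁻¹ •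
          (B - ((x : ℂ) + zS)⁻¹ • (1 : Matrix (Fin s) (Fin s) ℂ)).adjugate)))
        Filter.atBot (nhds ((-(0 : ℂ)) • ((B - (0 : ℂ) • (1 : Matrix (Fin s) (Fin s) ℂ)).det⁻¹ •
          (B - (0 : ℂ) • (1 : Matrix (Fin s) (Fin s) ℂ)).adjugate))) := by
      refine hw.neg.smul (Filter.Tendsto.smul ?_ ?_)
      · exact ((hdc.tendsto 0).comp hw).inv₀ (by simpa using hBdet)
      · exact (hac.tendsto 0).comp hw
    rw [neg_zero, zero_smul] at h1
    refine h1.congr' ?_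
    filter_upwards [hinv] with x hx
    exact (Matrix.inv_eq_right_inv hx).symm
  constructor
  · obtain ⟨x₀, h⟩ := Filter.eventually_atBot.1 hinv
    exact ⟨x₀, fun x hx => Matrix.isUnit_det_of_right_inverse (h x hx)⟩
  · have hexp : Filter.Tendsto (fun x : ℝ => phi 0 (x : ℂ)) Filter.atBot (nhds 0) := by
      rw [tendsto_zero_iff_norm_tendsto_zero]
      simpa [phi, Complex.norm_exp] using Real.tendsto_exp_atBot
    have hvec : ∀ j, Filter.Tendsto (fun x : ℝ =>
        ((1 - ((x : ℂ) + zS) • B)⁻¹.mulVec (fun _ => 1)) j) Filter.atBot (nhds 0) := by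
      intro j
      have hc : Continuous (fun M : Matrix (Fin s) (Fin s) ℂ => M.mulVec (fun _ => 1) j) := by
        simp only [Matrix.mulVec, dotProduct]
        fun_prop
      have := (hc.tendsto 0).comp hlim
      simpa [Function.comp_def] using this
    have hmu : ∀ j, ∀ᶠ x : ℝ in Filter.atBot,
        ‖∑ k : Fin (K + 1), phi ((k : ℕ) + 1) (x : ℂ) * ((γ k j : ℝ) : ℂ)‖
          ≤ ∑ k : Fin (K + 1), |γ k j| := by
      intro j
      filter_upwards [Filter.eventually_le_atBot (0 : ℝ)] with x hx
      refine norm_sum_le_of_le _ fun k _ => ?_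
      rw [norm_mul, Complex.norm_real, Real.norm_eq_abs]
      exact mul_le_of_le_one_left (abs_nonneg _) (phi_bound k x hx)
    have hsum : Filter.Tendsto (fun x : ℝ => ∑ j,
        (∑ k : Fin (K + 1), phi ((k : ℕ) + 1) (x : ℂ) * ((γ k j : ℝ) : ℂ)) *
          ((1 - ((x : ℂ) + zS) • B)⁻¹.mulVec (fun _ => 1)) j) Filter.atBot (nhds 0) := by
      rw [← Finset.sum_const_zero (s := (Finset.univ : Finset (Fin s)))]
      refine tendsto_finsetSum _ fun j _ => ?_
      exact Filter.isBoundedUnder_le_mul_tendsto_zero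
        (Filter.isBoundedUnder_of_eventually_le (hmu j)) (hvec j)
    simpa using hexp.add (hsum.const_mul zS)
end

section
/- Let A ∈ ℝ^{s×s} be invertible and γ^0, …, γ^K ∈ ℝ^s, and fix z^F ∈ ℂ. Then for all sufficiently negative real x the matrix I − (z^F + x)A is invertible, and R(z^F, x) → φ₀(z^F) − μ(z^F)ᵀ A^{−1}𝟙 as x → −∞ along the reals. (Slow stiff limit of the scalar stability function of a step predictor-corrector MRI-GARK method with invertible base coefficient matrix, e.g. an SDIRK base method.) -/
/-- Slow stiff limit of the scalar stability function of a step
predictor-corrector MRI-GARK method with invertible base coefficient matrix: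
R(z^F, x) → φ₀(z^F) − μ(z^F)ᵀ A⁻¹𝟙 as x → −∞. -/
theorem stmt_9 (s K : ℕ) (hs : 1 ≤ s) (A : Matrix (Fin s) (Fin s) ℝ)
    (hA : IsUnit A.det) (γ : Fin (K + 1) → Fin s → ℝ) (zF : ℂ) :
    (∃ x₀ : ℝ, ∀ x : ℝ, x ≤ x₀ →
      IsUnit (1 - (zF + (x : ℂ)) • A.map Complex.ofReal).det) ∧
    Filter.Tendsto
      (fun x : ℝ => phi 0 zF + (x : ℂ) * ∑ j,
        (∑ k : Fin (K + 1), phi ((k : ℕ) + 1) zF * ((γ k j : ℝ) : ℂ)) *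
          ((1 - (zF + (x : ℂ)) • A.map Complex.ofReal)⁻¹.mulVec (fun _ => 1)) j)
      Filter.atBot
      (nhds (phi 0 zF - ∑ j,
        (∑ k : Fin (K + 1), phi ((k : ℕ) + 1) zF * ((γ k j : ℝ) : ℂ)) *
          (((A⁻¹.mulVec (fun _ => 1)) j : ℝ) : ℂ))) := by
  set B : Matrix (Fin s) (Fin s) ℂ := A.map Complex.ofReal with hB
  have hBdet : B.det = ((A.det : ℝ) : ℂ) := by
    have := RingHom.map_det Complex.ofRealHom A
    exact this.symm
  have hBu : IsUnit B.det := by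
    rw [hBdet, isUnit_iff_ne_zero]
    exact_mod_cast hA.ne_zero
  have hBinv : B⁻¹ = (A⁻¹).map Complex.ofReal := by
    apply Matrix.inv_eq_right_inv
    have h : (A * A⁻¹).map Complex.ofRealHom = 1 := by
      rw [Matrix.mul_nonsing_inv A hA]
      exact Matrix.map_one _ (map_zero _) (map_one _)
    rw [Matrix.map_mul] at h
    exact h
  let N : ℂ → Matrix (Fin s) (Fin s) ℂ := fun w => w • (1 - zF • B) - B
  have hNc : Continuous N := by fun_prop
  have hN0 : N 0 = -B := by simp [N]
  have hN0u : IsUnit (N 0).det := by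
    rw [hN0, ← Matrix.isUnit_iff_isUnit_det, IsUnit.neg_iff, Matrix.isUnit_iff_isUnit_det]
    exact hBu
  have hw : Filter.Tendsto (fun x : ℝ => ((x : ℂ))⁻¹) Filter.atBot (nhds 0) := by
    have h := (Complex.continuous_ofReal.tendsto 0).comp (tendsto_inv_atBot_zero (𝕜 := ℝ))
    simpa [Function.comp_def] using h
  have hMN : ∀ x : ℝ, x ≠ 0 → 1 - (zF + (x : ℂ)) • B = (x : ℂ) • N ((x : ℂ)⁻¹) := by
    intro x hx
    have hx' : (x : ℂ) ≠ 0 := by exact_mod_cast hx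
    simp only [N, smul_sub, smul_smul, add_smul, mul_inv_cancel₀ hx', one_smul, ← mul_assoc,
      one_mul]
    abel
  have hNx : Filter.Tendsto (fun x : ℝ => N ((x : ℂ)⁻¹)) Filter.atBot (nhds (N 0)) :=
    (hNc.tendsto 0).comp hw
  have hdet : Filter.Tendsto (fun x : ℝ => (N ((x : ℂ)⁻¹)).det) Filter.atBot
      (nhds (N 0).det) :=
    ((continuous_id.matrix_det).tendsto (N 0)).comp hNx
  have hadj : Filter.Tendsto (fun x : ℝ => (N ((x : ℂ)⁻¹)).adjugate) Filter.atBot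
      (nhds (N 0).adjugate) :=
    ((continuous_id.matrix_adjugate).tendsto (N 0)).comp hNx
  have hinv : Filter.Tendsto (fun x : ℝ => (N ((x : ℂ)⁻¹))⁻¹) Filter.atBot
      (nhds (N 0)⁻¹) := by
    simp only [Matrix.inv_def, Ring.inverse_eq_inv']
    exact (hdet.inv₀ hN0u.ne_zero).smul hadj
  have hN0inv : (N 0)⁻¹ = -B⁻¹ := by
    rw [hN0]
    apply Matrix.inv_eq_right_inv
    rw [neg_mul_neg, Matrix.mul_nonsing_inv B hBu]
  have hne : ∀ᶠ x : ℝ in Filter.atBot, x ≠ 0 :=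
    (Filter.eventually_lt_atBot 0).mono fun x hx => hx.ne
  have hNe : ∀ᶠ x : ℝ in Filter.atBot, (N ((x : ℂ)⁻¹)).det ≠ 0 :=
    hdet.eventually_ne hN0u.ne_zero
  constructor
  · apply Filter.eventually_atBot.mp
    filter_upwards [hne, hNe] with x hx hd
    rw [hMN x hx, Matrix.det_smul, isUnit_iff_ne_zero]
    exact mul_ne_zero (pow_ne_zero _ (by exact_mod_cast hx)) hd
  · set c : Fin s → ℂ := fun j =>
      ∑ k : Fin (K + 1), phi ((k : ℕ) + 1) zF * ((γ k j : ℝ) : ℂ) with hc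
    have hlim : Filter.Tendsto (fun x : ℝ => phi 0 zF + ∑ j,
        c j * ((N ((x : ℂ)⁻¹))⁻¹.mulVec (fun _ => 1)) j) Filter.atBot
        (nhds (phi 0 zF + ∑ j, c j * ((N 0)⁻¹.mulVec (fun _ => 1)) j)) := by
      have hcont : Continuous (fun P : Matrix (Fin s) (Fin s) ℂ =>
          phi 0 zF + ∑ j, c j * (P.mulVec (fun _ => 1)) j) := by
        simp only [Matrix.mulVec, dotProduct]
        fun_prop
      exact (hcont.tendsto _).comp hinv
    have heq : phi 0 zF + ∑ j, c j * ((N 0)⁻¹.mulVec (fun _ => 1)) j =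
        phi 0 zF - ∑ j, c j * (((A⁻¹.mulVec (fun _ => 1)) j : ℝ) : ℂ) := by
      rw [hN0inv, hBinv, sub_eq_add_neg, ← Finset.sum_neg_distrib]
      congr 1
      apply Finset.sum_congr rfl
      intro j _
      simp [Matrix.mulVec, dotProduct]
    rw [heq] at hlim
    refine hlim.congr' ?_
    filter_upwards [hne, hNe] with x hx hd
    have hx' : (x : ℂ) ≠ 0 := by exact_mod_cast hx
    have hMi : (1 - (zF + (x : ℂ)) • B)⁻¹ = (x : ℂ)⁻¹ • (N ((x : ℂ)⁻¹))⁻¹ := by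
      rw [hMN x hx]
      apply Matrix.inv_eq_right_inv
      rw [smul_mul_smul_comm, mul_inv_cancel₀ hx', one_smul,
        Matrix.mul_nonsing_inv _ (isUnit_iff_ne_zero.mpr hd)]
    rw [hMi, Finset.mul_sum]
    congr 1
    apply Finset.sum_congr rfl
    intro j _
    rw [Matrix.smul_mulVec, Pi.smul_apply, smul_eq_mul]
    field_simp
    exact mul_comm _ _
end

section
/- Let A ∈ ℝ^{s×s} be invertible and γ^0, …, γ^K ∈ ℝ^s. Then the function z ↦ φ₀(z) − μ(z)ᵀ A^{−1}𝟙 does not vanish identically on (−∞, 0): there exists a real z < 0 with φ₀(z) − μ(z)ᵀ A^{−1}𝟙 ≠ 0. (Consequently the slow stiff limit of the stability function of a step predictor-corrector MRI-GARK method cannot be zero for all fast arguments, due to the linear independence of the φ-functions.) -/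
open Filter Topology MeasureTheory in
lemma phi_succ_differentiable (k : ℕ) : Differentiable ℂ (phi (k + 1)) := by
  intro z₀
  have key := (intervalIntegral.hasDerivAt_integral_of_dominated_loc_of_deriv_le
    (μ := volume) (a := 0) (b := 1) (x₀ := z₀) (s := Metric.ball z₀ 1)
    (F := fun (z : ℂ) (t : ℝ) => Complex.exp (z * (1 - (t : ℂ))) * (t : ℂ) ^ k)
    (F' := fun (z : ℂ) (t : ℝ) =>
      Complex.exp (z * (1 - (t : ℂ))) * (1 - (t : ℂ)) * (t : ℂ) ^ k)
    (bound := fun _ => Real.exp (‖z₀‖ + 1))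
    (Metric.ball_mem_nhds z₀ one_pos)
    (Eventually.of_forall fun z => (Continuous.aestronglyMeasurable (by fun_prop)))
    (Continuous.intervalIntegrable (by fun_prop) _ _)
    (Continuous.aestronglyMeasurable (by fun_prop))
    ?_ (by simp) ?_).2
  · exact key.differentiableAt
  · refine Eventually.of_forall fun t ht z hz => ?_
    rw [Set.uIoc_of_le zero_le_one] at ht
    have h1 : ‖(1 - (t : ℂ))‖ ≤ 1 := by
      rw [show (1 - (t : ℂ)) = ((1 - t : ℝ) : ℂ) by push_cast; rfl, Complex.norm_real,
        Real.norm_eq_abs, abs_le]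
      constructor <;> linarith [ht.1, ht.2]
    have h2 : ‖(t : ℂ) ^ k‖ ≤ 1 := by
      rw [norm_pow, Complex.norm_real, Real.norm_eq_abs, abs_of_pos ht.1]
      exact pow_le_one₀ ht.1.le ht.2
    have hz' : ‖z‖ ≤ ‖z₀‖ + 1 := by
      have h3 : ‖z - z₀‖ < 1 := by simpa [dist_eq_norm] using hz
      have h4 := norm_add_le (z - z₀) z₀
      rw [sub_add_cancel] at h4
      linarith
    have h5 : ‖Complex.exp (z * (1 - (t : ℂ)))‖ ≤ Real.exp (‖z₀‖ + 1) := by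
      refine (Complex.norm_exp_le_exp_norm _).trans (Real.exp_le_exp.2 ?_)
      rw [norm_mul]
      nlinarith [norm_nonneg z, norm_nonneg (1 - (t : ℂ))]
    rw [norm_mul, norm_mul]
    calc _ ≤ Real.exp (‖z₀‖ + 1) * 1 * 1 := by gcongr
      _ = _ := by ring
  · refine Eventually.of_forall fun t ht z hz => ?_
    have h : HasDerivAt (fun z : ℂ => z * (1 - (t : ℂ))) (1 - (t : ℂ)) z := by
      simpa using (hasDerivAt_id z).mul_const (1 - (t : ℂ))
    exact h.cexp.mul_const _

open Filter Topology MeasureTheory in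
lemma phi_succ_tendsto (k : ℕ) :
    Tendsto (fun x : ℝ => Complex.exp (-(x : ℂ)) * phi (k + 1) (x : ℂ)) atTop (𝓝 0) := by
  have h : ∀ x : ℝ, Complex.exp (-(x : ℂ)) * phi (k + 1) (x : ℂ) =
      ∫ t in (0:ℝ)..1, ((Real.exp (-(x * t)) : ℝ) : ℂ) * (t : ℂ) ^ k := by
    intro x
    simp only [phi]
    rw [← intervalIntegral.integral_const_mul]
    congr 1
    ext t
    rw [← mul_assoc, ← Complex.exp_add, Complex.ofReal_exp]
    congr 2
    push_cast
    ring
  simp only [h]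
  have key := intervalIntegral.tendsto_integral_filter_of_dominated_convergence
    (μ := volume) (a := 0) (b := 1) (l := atTop) (f := fun _ => (0 : ℂ))
    (F := fun (x : ℝ) (t : ℝ) => ((Real.exp (-(x * t)) : ℝ) : ℂ) * (t : ℂ) ^ k)
    (fun _ => 1)
    (Eventually.of_forall fun z => (Continuous.aestronglyMeasurable (by fun_prop)))
    ?_ (by simp) ?_
  · simpa using key
  · filter_upwards [eventually_ge_atTop 0] with x hx
    refine Eventually.of_forall fun t ht => ?_
    rw [Set.uIoc_of_le zero_le_one] at ht
    rw [norm_mul, norm_pow, Complex.norm_real, Complex.norm_real, Real.norm_eq_abs,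
      Real.norm_eq_abs, abs_of_pos ht.1, abs_of_pos (Real.exp_pos _)]
    refine mul_le_one₀ ?_ (pow_nonneg ht.1.le _) (pow_le_one₀ ht.1.le ht.2)
    rw [Real.exp_le_one_iff]
    nlinarith [ht.1]
  · refine Eventually.of_forall fun t ht => ?_
    rw [Set.uIoc_of_le zero_le_one] at ht
    have h1 : Tendsto (fun x : ℝ => Real.exp (-(x * t))) atTop (𝓝 0) :=
      Real.tendsto_exp_neg_atTop_nhds_zero.comp (tendsto_id.atTop_mul_const ht.1)
    have h2 := ((Complex.continuous_ofReal.tendsto 0).comp h1).mul_const ((t : ℂ) ^ k)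
    simpa using h2

/-- The slow stiff limit z ↦ φ₀(z) − μ(z)ᵀ A⁻¹𝟙 of the stability function of a
step predictor-corrector MRI-GARK method does not vanish identically on (−∞, 0). -/
theorem stmt_10 (s K : ℕ) (hs : 1 ≤ s) (A : Matrix (Fin s) (Fin s) ℝ)
    (hA : IsUnit A.det) (γ : Fin (K + 1) → Fin s → ℝ) :
    ∃ z : ℝ, z < 0 ∧
      phi 0 (z : ℂ) - ∑ j,
        (∑ k : Fin (K + 1), phi ((k : ℕ) + 1) (z : ℂ) * ((γ k j : ℝ) : ℂ)) *
          (((A⁻¹.mulVec (fun _ => 1)) j : ℝ) : ℂ) ≠ 0 := by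
  classical
  by_contra hcon
  push Not at hcon
  set b : Fin s → ℝ := A⁻¹.mulVec (fun _ => 1) with hb
  let S : ℂ → ℂ := fun z => ∑ j,
    (∑ k : Fin (K + 1), phi ((k : ℕ) + 1) z * ((γ k j : ℝ) : ℂ)) * ((b j : ℝ) : ℂ)
  have hS : Differentiable ℂ S := by
    refine Differentiable.fun_sum fun j _ => Differentiable.mul_const ?_ _
    exact Differentiable.fun_sum fun k _ => (phi_succ_differentiable k).mul_const _
  have hfreq : ∃ᶠ z in nhdsWithin (-1 : ℂ) {(-1 : ℂ)}ᶜ, Complex.exp z = S z := by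
    have ht : Filter.Tendsto (fun x : ℝ => (x : ℂ)) (nhdsWithin (-1 : ℝ) {(-1 : ℝ)}ᶜ)
        (nhdsWithin (-1 : ℂ) {(-1 : ℂ)}ᶜ) := by
      refine tendsto_nhdsWithin_iff.2 ⟨?_, ?_⟩
      · have := Complex.continuous_ofReal.tendsto (-1)
        simp only [Complex.ofReal_neg, Complex.ofReal_one] at this
        exact this.mono_left nhdsWithin_le_nhds
      · filter_upwards [self_mem_nhdsWithin] with x hx h
        have h' : (x : ℂ) = -1 := h
        exact hx (show x = -1 by exact_mod_cast h')
    refine ht.frequently (Filter.Eventually.frequently ?_)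
    filter_upwards [nhdsWithin_le_nhds (Iio_mem_nhds (show (-1 : ℝ) < 0 by norm_num))] with x hx
    exact sub_eq_zero.1 (hcon x hx)
  have heq : Complex.exp = S := AnalyticOnNhd.eq_of_frequently_eq
    (Complex.differentiable_exp.differentiableOn.analyticOnNhd isOpen_univ)
    (hS.differentiableOn.analyticOnNhd isOpen_univ) hfreq
  have hlim : Filter.Tendsto (fun x : ℝ => Complex.exp (-(x : ℂ)) * S x) Filter.atTop
      (nhds 0) := by
    have h1 : Filter.Tendsto (fun x : ℝ => ∑ j, (∑ k : Fin (K + 1),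
        (Complex.exp (-(x : ℂ)) * phi ((k : ℕ) + 1) x) * ((γ k j : ℝ) : ℂ)) * ((b j : ℝ) : ℂ))
        Filter.atTop (nhds (∑ j : Fin s, (∑ k : Fin (K + 1),
          (0 : ℂ) * ((γ k j : ℝ) : ℂ)) * ((b j : ℝ) : ℂ))) := by
      refine tendsto_finsetSum _ fun j _ => Filter.Tendsto.mul_const _ ?_
      refine tendsto_finsetSum _ fun k _ => Filter.Tendsto.mul_const _ ?_
      exact phi_succ_tendsto k
    simp only [zero_mul, Finset.sum_const_zero] at h1
    refine h1.congr fun x => ?_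
    simp only [S, Finset.mul_sum, Finset.sum_mul, mul_assoc]
  have hone : ∀ x : ℝ, Complex.exp (-(x : ℂ)) * S x = 1 := by
    intro x
    rw [← heq, ← Complex.exp_add]
    simp
  simp only [hone] at hlim
  exact one_ne_zero (tendsto_nhds_unique tendsto_const_nhds hlim)
end

section
/- Let A = D + T ∈ ℝ^{s×s} with D diagonal and T strictly lower triangular, let δc ∈ ℝ^s, c̄ ∈ ℝ^s, and let Γ_{i,j}(t) = Σ_{k=0}^K Γ^k_{i,j} t^k and Ψ_{i,j}(t) = Σ_{k=0}^K Ψ^k_{i,j} t^k. Let H > 0, λ^F, λ^S ∈ ℂ, z^F = Hλ^F, z^S = Hλ^S, z = z^F + z^S, and assume I − zD and 𝔐(z^F, z^S) are invertible. Let y_n ∈ ℂ and suppose Y ∈ ℂ^s and Y* ∈ ℂ^s satisfy: Y* = (I − zD)^{−1}(y_n 𝟙 + z T Y); Y₀ := y_n; and for each i = 1, …, s there is a function v_i differentiable on [0, H] with v_i(0) = Y_{i−1}, v_i′(θ) = δc_i λ^F v_i(θ) + λ^S Σ_{j=1}^s Γ_{i,j}(θ/H) Y_j + λ^S Σ_{j=1}^s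 Ψ_{i,j}(θ/H) Y*_j for θ ∈ [0, H], and Y_i = v_i(H). Then Y_s = R(z^F, z^S) y_n, where R(z^F, z^S) = e_sᵀ 𝔐(z^F, z^S)^{−1} ( φ₀(δc₁ z^F) e₁ + z^S ν(z^F)(I − zD)^{−1}𝟙 ). (Scalar linear stability function of an internal stage predictor-corrector MRI-GARK method applied to y′ = λ^F y + λ^S y.) -/
open intervalIntegral in
lemma var_const (K : ℕ) (H : ℝ) (hH : 0 < H) (a : ℂ) (G : Fin (K + 1) → ℂ) (v : ℝ → ℂ)
    (hv : ∀ θ ∈ Set.Icc (0 : ℝ) H, HasDerivWithinAt v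
      (a * v θ + ∑ k : Fin (K + 1), G k * (((θ / H : ℝ)) : ℂ) ^ (k : ℕ)) (Set.Icc 0 H) θ) :
    v H = phi 0 (H * a) * v 0 + H * ∑ k : Fin (K + 1), phi ((k : ℕ) + 1) (H * a) * G k := by
  have hc : ContinuousOn v (Set.Icc 0 H) := fun θ hθ => (hv θ hθ).continuousWithinAt
  have hwc : ContinuousOn (fun t : ℝ => Complex.exp (H * a * (1 - (t : ℂ))) * v (H * t))
      (Set.Icc 0 1) := by
    apply ContinuousOn.mul
    · fun_prop
    · apply hc.comp (by fun_prop)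
      intro t ht
      exact ⟨by have := ht.1; positivity, by nlinarith [ht.2]⟩
  have key := integral_eq_sub_of_hasDerivAt_of_le (a := (0:ℝ)) (b := 1) zero_le_one
    (f' := fun t : ℝ => ∑ k : Fin (K + 1),
      (H * G k) * (Complex.exp (H * a * (1 - (t : ℂ))) * (t : ℂ) ^ (k : ℕ))) hwc
    (by
      intro t ht
      have h0 : 0 < H * t := mul_pos hH ht.1
      have h1 : H * t < H := by nlinarith [ht.2]
      have hd := (hv (H * t) ⟨h0.le, h1.le⟩).hasDerivAt (Icc_mem_nhds h0 h1)
      have hl : HasDerivAt (fun t : ℝ => H * t) H t := by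
        simpa using (hasDerivAt_id t).const_mul H
      have h2 := HasDerivAt.scomp t hd hl
      have h3 : HasDerivAt (fun t : ℝ => Complex.exp (H * a * (1 - (t : ℂ))))
          (Complex.exp (H * a * (1 - (t : ℂ))) * (H * a * (-1))) t := by
        have := ((Complex.ofRealCLM.hasDerivAt (x := t)).const_sub 1).const_mul ((H : ℂ) * a)
        simpa using this.cexp
      have h4 := h3.mul h2
      refine h4.congr_deriv ?_
      have e : H * t / H = t := by field_simp
      rw [e]
      simp only [Function.comp, Complex.real_smul]
      rw [mul_add (H : ℂ), mul_add (Complex.exp _), Finset.mul_sum, Finset.mul_sum]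
      rw [← add_assoc]
      have : ∀ x y w : ℂ, x = 0 → y = w → x + y = w := by intros; simp_all
      apply this
      · ring
      · exact Finset.sum_congr rfl fun k _ => by ring)
    (Continuous.intervalIntegrable (by fun_prop) _ _)
  rw [intervalIntegral.integral_finsetSum
    (fun k _ => Continuous.intervalIntegrable (by fun_prop) _ _)] at key
  simp only [intervalIntegral.integral_const_mul] at key
  simp only [Complex.ofReal_one, sub_self, mul_zero, Complex.exp_zero, one_mul, mul_one,
    Complex.ofReal_zero, sub_zero] at key
  simp only [phi]
  rw [← sub_eq_iff_eq_add', ← key, Finset.mul_sum]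
  exact Finset.sum_congr rfl fun k _ => by ring

/-- Scalar linear stability function of an internal stage predictor-corrector
MRI-GARK method applied to y′ = λ^F y + λ^S y. -/
theorem stmt_14 (s K : ℕ) (hs : 0 < s)
    (D T : Matrix (Fin s) (Fin s) ℝ) (hD : D.IsDiag)
    (hT : ∀ i j : Fin s, i ≤ j → T i j = 0)
    (A : Matrix (Fin s) (Fin s) ℝ) (hA : A = D + T)
    (δc cbar : Fin s → ℝ)
    (Γ Ψ : Fin (K + 1) → Matrix (Fin s) (Fin s) ℝ)
    (H : ℝ) (hH : 0 < H) (lamF lamS zF zS z : ℂ)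
    (hzF : zF = H * lamF) (hzS : zS = H * lamS) (hz : z = zF + zS)
    (L : Matrix (Fin s) (Fin s) ℂ)
    (hL : ∀ i j : Fin s, L i j = if (i : ℕ) = (j : ℕ) + 1 then 1 else 0)
    (μ ν : Matrix (Fin s) (Fin s) ℂ)
    (hμ : μ = ∑ k : Fin (K + 1),
      Matrix.diagonal (fun i => phi ((k : ℕ) + 1) (((δc i : ℝ) : ℂ) * zF)) *
        (Γ k).map Complex.ofReal)
    (hν : ν = ∑ k : Fin (K + 1),
      Matrix.diagonal (fun i => phi ((k : ℕ) + 1) (((δc i : ℝ) : ℂ) * zF)) *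
        (Ψ k).map Complex.ofReal)
    (M : Matrix (Fin s) (Fin s) ℂ)
    (hM : M = 1 - Matrix.diagonal (fun i => phi 0 (((δc i : ℝ) : ℂ) * zF)) * L
        - zS • μ
        - (zS * z) • (ν * (1 - z • D.map Complex.ofReal)⁻¹ * T.map Complex.ofReal))
    (hDinv : IsUnit (1 - z • D.map Complex.ofReal).det)
    (hMinv : IsUnit M.det)
    (yn : ℂ) (Y Ystar : Fin s → ℂ)
    (hYstar : Ystar = (1 - z • D.map Complex.ofReal)⁻¹.mulVec
        (yn • (fun _ : Fin s => (1 : ℂ)) + z • (T.map Complex.ofReal).mulVec Y))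
    (v : Fin s → ℝ → ℂ)
    (hv0 : ∀ i : Fin s, v i 0 =
      if _ : (i : ℕ) = 0 then yn
      else Y ⟨(i : ℕ) - 1, Nat.lt_of_le_of_lt (Nat.sub_le _ _) i.2⟩)
    (hv : ∀ i : Fin s, ∀ θ ∈ Set.Icc (0 : ℝ) H,
      HasDerivWithinAt (v i)
        (((δc i : ℝ) : ℂ) * lamF * v i θ
          + lamS * ∑ j, (∑ k : Fin (K + 1),
              ((Γ k i j : ℝ) : ℂ) * (((θ / H : ℝ)) : ℂ) ^ (k : ℕ)) * Y j
          + lamS * ∑ j, (∑ k : Fin (K + 1),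
              ((Ψ k i j : ℝ) : ℂ) * (((θ / H : ℝ)) : ℂ) ^ (k : ℕ)) * Ystar j)
        (Set.Icc 0 H) θ)
    (hY : ∀ i : Fin s, Y i = v i H) :
    Y ⟨s - 1, Nat.sub_lt hs Nat.one_pos⟩ =
      (M⁻¹.mulVec
        (phi 0 (((δc ⟨0, hs⟩ : ℝ) : ℂ) * zF) • (Pi.single (⟨0, hs⟩ : Fin s) (1 : ℂ) : Fin s → ℂ)
          + zS • ν.mulVec ((1 - z • D.map Complex.ofReal)⁻¹.mulVec (fun _ : Fin s => (1 : ℂ)))))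
        ⟨s - 1, Nat.sub_lt hs Nat.one_pos⟩ * yn := by
  have hYi : ∀ i, Y i = phi 0 (δc i * zF) * v i 0 + zS * (μ.mulVec Y i + ν.mulVec Ystar i) := by
    intro i
    have := var_const K H hH (δc i * lamF)
      (fun k => lamS * ((∑ j, (Γ k i j : ℂ) * Y j) + ∑ j, (Ψ k i j : ℂ) * Ystar j)) (v i) (by
        intro θ hθ
        refine (hv i θ hθ).congr_deriv ?_
        simp only [Finset.sum_mul, Finset.mul_sum, mul_add, add_mul, Finset.sum_add_distrib]
        rw [add_assoc, Finset.sum_comm]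
        congr 2
        · exact Finset.sum_congr rfl fun k _ => Finset.sum_congr rfl fun j _ => by ring
        · rw [Finset.sum_comm]
          exact Finset.sum_congr rfl fun k _ => Finset.sum_congr rfl fun j _ => by ring)
    rw [hY i, this]
    have e : (H : ℂ) * (δc i * lamF) = δc i * zF := by rw [hzF]; ring
    rw [e, hμ, hν, hzS, Matrix.sum_mulVec, Matrix.sum_mulVec, Finset.sum_apply, Finset.sum_apply,
      ← Finset.sum_add_distrib, Finset.mul_sum, Finset.mul_sum]
    congr 1
    refine Finset.sum_congr rfl fun k _ => ?_
    rw [← Matrix.mulVec_mulVec, ← Matrix.mulVec_mulVec, Matrix.mulVec_diagonal,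
      Matrix.mulVec_diagonal]
    simp only [Matrix.mulVec, dotProduct, Matrix.map_apply]
    ring
  have hv0' : ∀ i, phi 0 (δc i * zF) * v i 0 =
      (Matrix.diagonal (fun i => phi 0 (((δc i : ℝ) : ℂ) * zF)) * L).mulVec Y i
      + yn * (phi 0 (((δc ⟨0, hs⟩ : ℝ) : ℂ) * zF) •
        (Pi.single (⟨0, hs⟩ : Fin s) (1 : ℂ) : Fin s → ℂ)) i := by
    intro i
    rw [← Matrix.mulVec_mulVec, Matrix.mulVec_diagonal, hv0 i]
    simp only [Matrix.mulVec, dotProduct, hL, ite_mul, one_mul, zero_mul, Pi.smul_apply,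
      smul_eq_mul]
    by_cases hi : (i : ℕ) = 0
    · have hi' : i = ⟨0, hs⟩ := Fin.ext hi
      subst hi'
      simp [mul_comm]
    · have hi' : i ≠ ⟨0, hs⟩ := fun h => hi (by rw [h])
      rw [dif_neg hi, Pi.single_eq_of_ne hi']
      rw [Finset.sum_eq_single ⟨(i : ℕ) - 1, Nat.lt_of_le_of_lt (Nat.sub_le _ _) i.2⟩]
      · rw [if_pos (by simp only []; omega)]
        ring
      · intro b _ hb
        rw [if_neg]
        intro h
        apply hb
        apply Fin.ext
        simp only []
        omega
      · simp
  have hMY : M.mulVec Y = yn • (phi 0 (((δc ⟨0, hs⟩ : ℝ) : ℂ) * zF) •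
        (Pi.single (⟨0, hs⟩ : Fin s) (1 : ℂ) : Fin s → ℂ)
          + zS • ν.mulVec ((1 - z • D.map Complex.ofReal)⁻¹.mulVec (fun _ : Fin s => (1 : ℂ)))) := by
    funext i
    have h := hYi i
    rw [hv0' i, hYstar] at h
    rw [hM]
    simp only [Matrix.sub_mulVec, Matrix.one_mulVec, Matrix.smul_mulVec, Matrix.mulVec_add,
      Matrix.mulVec_smul, Pi.sub_apply, Pi.add_apply, Pi.smul_apply, smul_eq_mul,
      Matrix.mulVec_mulVec, Matrix.mul_assoc] at h ⊢
    linear_combination h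
  have hfin : Y = M⁻¹.mulVec (M.mulVec Y) := by
    rw [Matrix.mulVec_mulVec, Matrix.nonsing_inv_mul _ hMinv, Matrix.one_mulVec]
  rw [congrFun hfin ⟨s - 1, Nat.sub_lt hs Nat.one_pos⟩, hMY, Matrix.mulVec_smul, Pi.smul_apply,
    smul_eq_mul, mul_comm]
end

section
/- Let D ∈ ℝ^{s×s} be an invertible diagonal matrix, T ∈ ℝ^{s×s}, let δc ∈ ℝ^s with δc_i > 0 for all i, and let Γ^0, …, Γ^K, Ψ^0, …, Ψ^K ∈ ℝ^{s×s}. Then μ(z) = ν(z) D^{−1} T holds for all real z < 0 if and only if Γ^k = Ψ^k D^{−1} T for every 0 ≤ k ≤ K. (This is the stability simplifying assumption for internal stage predictor-corrector MRI-GARK methods, which guarantees boundedness of the stability function in the slow stiff limit.) -/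
noncomputable def rphi (k : ℕ) (w : ℝ) : ℝ :=
  ∫ t in (0:ℝ)..1, Real.exp (w * (1 - t)) * t ^ k

lemma phi_ofReal (k : ℕ) (w : ℝ) : phi (k + 1) (w : ℂ) = ((rphi k w : ℝ) : ℂ) := by
  unfold phi rphi
  rw [← intervalIntegral.integral_ofReal]
  push_cast
  rfl

lemma rphi_zero (w : ℝ) : w * rphi 0 w = Real.exp w - 1 := by
  have h : ∀ t ∈ Set.uIcc (0:ℝ) 1, HasDerivAt (fun t : ℝ => - Real.exp (w * (1 - t)))
      (w * (Real.exp (w * (1 - t)) * t ^ 0)) t := by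
    intro t _
    have h1 : HasDerivAt (fun t : ℝ => w * (1 - t)) (w * (-1)) t :=
      ((hasDerivAt_id t).const_sub 1).const_mul w
    refine h1.exp.neg.congr_deriv ?_
    ring
  have := intervalIntegral.integral_eq_sub_of_hasDerivAt h
    (Continuous.intervalIntegrable (by fun_prop) _ _)
  rw [intervalIntegral.integral_const_mul] at this
  unfold rphi
  rw [this]
  simp
  ring

lemma rphi_succ (k : ℕ) (w : ℝ) : w * rphi (k + 1) w = (k + 1) * rphi k w - 1 := by
  have h : ∀ t ∈ Set.uIcc (0:ℝ) 1, HasDerivAt (fun t : ℝ => Real.exp (w * (1 - t)) * t ^ (k + 1))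
      ((k + 1) * (Real.exp (w * (1 - t)) * t ^ k)
        - w * (Real.exp (w * (1 - t)) * t ^ (k + 1))) t := by
    intro t _
    have h1 : HasDerivAt (fun t : ℝ => w * (1 - t)) (w * (-1)) t :=
      ((hasDerivAt_id t).const_sub 1).const_mul w
    have h2 := h1.exp.mul (hasDerivAt_pow (k + 1) t)
    refine h2.congr_deriv ?_
    push_cast
    ring
  have := intervalIntegral.integral_eq_sub_of_hasDerivAt h
    (Continuous.intervalIntegrable (by fun_prop) _ _)
  rw [intervalIntegral.integral_sub (Continuous.intervalIntegrable (by fun_prop) _ _)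
    (Continuous.intervalIntegrable (by fun_prop) _ _),
    intervalIntegral.integral_const_mul, intervalIntegral.integral_const_mul] at this
  unfold rphi
  simp at this
  linarith

lemma rphi_poly (k : ℕ) : ∃ Q : Polynomial ℝ, ∀ w : ℝ,
    w ^ (k + 1) * rphi k w = (k.factorial : ℝ) * Real.exp w - Q.eval w := by
  induction k with
  | zero => exact ⟨1, fun w => by simpa using rphi_zero w⟩
  | succ k ih =>
    obtain ⟨Q, hQ⟩ := ih
    refine ⟨Polynomial.C ((k:ℝ) + 1) * Q + Polynomial.X ^ (k + 1), fun w => ?_⟩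
    have h1 := hQ w
    have h2 := rphi_succ k w
    rw [pow_succ, mul_assoc, h2, Nat.factorial_succ]
    simp
    linear_combination ((k:ℝ) + 1) * h1

open Filter Topology in
lemma exp_poly_indep (P Q : Polynomial ℝ)
    (h : ∀ w : ℝ, w < 0 → Real.exp w * P.eval w = Q.eval w) : P = 0 := by
  have h1 := Polynomial.tendsto_div_exp_atTop (P.comp (-Polynomial.X))
  have h2 : Tendsto (fun x => (Q.comp (-Polynomial.X)).eval x) atTop (𝓝 0) := by
    refine h1.congr' ?_
    filter_upwards [eventually_gt_atTop 0] with x hx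
    have := h (-x) (by linarith)
    simp [← this, Real.exp_neg]
    field_simp
  have h3 : Q.comp (-Polynomial.X) = 0 :=
    Polynomial.leadingCoeff_eq_zero.1 ((Polynomial.tendsto_nhds_iff _).1 h2).1
  apply Polynomial.eq_zero_of_infinite_isRoot
  refine (Set.Iio_infinite (0:ℝ)).mono fun w hw => ?_
  have h4 := h w hw
  have h5 : (Q.comp (-Polynomial.X)).eval (-w) = 0 := by rw [h3]; simp
  simp at h5
  rw [h5] at h4
  simpa using h4

lemma rphi_indep (K : ℕ) (a : Fin (K + 1) → ℝ)
    (h : ∀ w : ℝ, w < 0 → ∑ k : Fin (K + 1), rphi k w * a k = 0) (k : Fin (K + 1)) : a k = 0 := by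
  choose Q hQ using rphi_poly
  have hP := exp_poly_indep
    (∑ k : Fin (K + 1), Polynomial.C (a k * ((k : ℕ).factorial : ℝ)) * Polynomial.X ^ (K - (k : ℕ)))
    (∑ k : Fin (K + 1), Polynomial.C (a k) * Polynomial.X ^ (K - (k : ℕ)) * Q k) (by
      intro w hw
      rw [← sub_eq_zero]
      have h0 : w ^ (K + 1) * ∑ k : Fin (K + 1), rphi k w * a k = 0 := by rw [h w hw, mul_zero]
      rw [← h0]
      simp only [Polynomial.eval_finsetSum, Finset.mul_sum, ← Finset.sum_sub_distrib]
      refine Finset.sum_congr rfl fun k _ => ?_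
      have e : w ^ (K + 1) = w ^ (K - (k : ℕ)) * w ^ ((k : ℕ) + 1) := by
        rw [← pow_add]; congr 1; omega
      rw [e]
      simp
      linear_combination (-(a k * w ^ (K - (k : ℕ)))) * hQ k w)
  have hc := congrArg (fun p => Polynomial.coeff p (K - (k : ℕ))) hP
  simp only [Polynomial.finsetSum_coeff, Polynomial.coeff_C_mul_X_pow,
    Polynomial.coeff_zero] at hc
  rw [Finset.sum_eq_single k] at hc
  · simpa [Nat.factorial_ne_zero] using hc
  · intro b _ hb
    rw [if_neg]
    intro hh
    apply hb
    ext
    omega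
  · simp

/-- The stability simplifying assumption for internal stage predictor-corrector
MRI-GARK methods: μ(z) = ν(z) D⁻¹ T for all z < 0 iff Γ^k = Ψ^k D⁻¹ T for all k. -/
theorem stmt_15 (s K : ℕ) (D T : Matrix (Fin s) (Fin s) ℝ)
    (hDdiag : D.IsDiag) (hDinv : IsUnit D.det)
    (δc : Fin s → ℝ) (hδc : ∀ i, 0 < δc i)
    (Γ Ψ : Fin (K + 1) → Matrix (Fin s) (Fin s) ℝ) :
    (∀ z : ℝ, z < 0 →
      (∑ k : Fin (K + 1),
        Matrix.diagonal (fun i => phi ((k : ℕ) + 1) ((δc i * z : ℝ) : ℂ)) *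
          (Γ k).map Complex.ofReal)
      = (∑ k : Fin (K + 1),
          Matrix.diagonal (fun i => phi ((k : ℕ) + 1) ((δc i * z : ℝ) : ℂ)) *
            (Ψ k).map Complex.ofReal) * (D⁻¹ * T).map Complex.ofReal)
    ↔ ∀ k : Fin (K + 1), Γ k = Ψ k * (D⁻¹ * T) := by
  generalize D⁻¹ * T = M
  have hm : ∀ k, (Ψ k).map Complex.ofReal * M.map Complex.ofReal
      = (Ψ k * M).map Complex.ofReal := fun k =>
    (Matrix.map_mul (f := Complex.ofRealHom)).symm
  simp only [Finset.sum_mul, Matrix.mul_assoc, hm]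
  constructor
  · intro h k
    ext i j
    have := rphi_indep K (fun k => Γ k i j - (Ψ k * M) i j) (by
      intro w hw
      have h1 := congrFun (congrFun (h (w / δc i) (div_neg_of_neg_of_pos hw (hδc i))) i) j
      simp only [Matrix.sum_apply, Matrix.diagonal_mul, Matrix.map_apply, phi_ofReal,
        mul_div_cancel₀ w (hδc i).ne'] at h1
      norm_cast at h1
      simp only [mul_sub, Finset.sum_sub_distrib]
      linarith) k
    linarith
  · intro h z _
    simp only [h]
end

section
/- Let s, m ≥ 1 and K ≥ 0 be integers, let A^S ∈ ℝ^{s×s}, c^S, δc ∈ ℝ^s, Ψ^0, …, Ψ^K, Γ^0, …, Γ^K ∈ ℝ^{s×s}, and let L ∈ ℝ^{s×s} be the lower shift matrix. Let b ∈ ℝ^m, A ∈ ℝ^{m×m}, c ∈ ℝ^m satisfy bᵀ𝟙_m = 1 and bᵀ A c^{×k} = ζ_k for all 0 ≤ k ≤ K, where ζ_k = 1/((k+1)(k+2)). Then (δc ⊗ b)ᵀ ( (L A^S c^S) ⊗ 𝟙_m + Σ_{k=0}^K ((Ψ^k + Γ^k) c^S) ⊗ (A c^{×k}) ) = δcᵀ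 ( L A^S + Σ_{k=0}^K ζ_k (Ψ^k + Γ^k) ) c^S. (This identity establishes the third order coupling condition bᶠᵀ Aᶠˢ cˢ = 1/6 of internal stage predictor-corrector MRI-GARK methods.) -/
open Matrix

/-- Identity establishing the third order coupling condition bᶠᵀ Aᶠˢ cˢ = 1/6 of
internal stage predictor-corrector MRI-GARK methods. -/
theorem stmt_16 (s m K : ℕ) (hs : 1 ≤ s) (hm : 1 ≤ m)
    (AS : Matrix (Fin s) (Fin s) ℝ) (cS δc : Fin s → ℝ)
    (Ψ Γ : Fin (K + 1) → Matrix (Fin s) (Fin s) ℝ)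
    (L : Matrix (Fin s) (Fin s) ℝ)
    (hL : ∀ i j : Fin s, L i j = if (i : ℕ) = (j : ℕ) + 1 then 1 else 0)
    (b : Fin m → ℝ) (A : Matrix (Fin m) (Fin m) ℝ) (c : Fin m → ℝ)
    (hb1 : b ⬝ᵥ (fun _ => (1 : ℝ)) = 1)
    (hbA : ∀ k : Fin (K + 1), b ⬝ᵥ A.mulVec (fun i => c i ^ (k : ℕ)) =
      1 / ((((k : ℕ) : ℝ) + 1) * (((k : ℕ) : ℝ) + 2))) :
    (fun p : Fin s × Fin m => δc p.1 * b p.2) ⬝ᵥ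
      (fun p : Fin s × Fin m =>
        (L.mulVec (AS.mulVec cS)) p.1 * 1
        + ∑ k : Fin (K + 1), ((Ψ k + Γ k).mulVec cS) p.1 *
            (A.mulVec (fun i => c i ^ (k : ℕ))) p.2)
    = δc ⬝ᵥ ((L * AS + ∑ k : Fin (K + 1),
        (1 / ((((k : ℕ) : ℝ) + 1) * (((k : ℕ) : ℝ) + 2))) • (Ψ k + Γ k)).mulVec cS) := by
  simp_rw [← hbA]
  generalize hV : (fun k : Fin (K + 1) => A.mulVec (fun i => c i ^ (k : ℕ))) = V
  have hV' : ∀ k : Fin (K + 1), A.mulVec (fun i => c i ^ (k : ℕ)) = V k := by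
    intro k; rw [← hV]
  simp_rw [hV']
  rw [Matrix.add_mulVec, Matrix.sum_mulVec, ← Matrix.mulVec_mulVec]
  simp_rw [Matrix.smul_mulVec]
  generalize L.mulVec (AS.mulVec cS) = u
  generalize hW : (fun k : Fin (K + 1) => (Ψ k + Γ k).mulVec cS) = W
  have hW' : ∀ k : Fin (K + 1), (Ψ k + Γ k).mulVec cS = W k := by
    intro k; rw [← hW]
  simp_rw [hW']
  simp only [dotProduct, mul_one] at hb1 ⊢
  rw [Fintype.sum_prod_type]
  refine Finset.sum_congr rfl fun i _ => ?_
  simp only [Pi.add_apply, Finset.sum_apply, Pi.smul_apply, smul_eq_mul, mul_add,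
    Finset.sum_add_distrib, Finset.mul_sum, Finset.sum_mul]
  congr 1
  · rw [← Finset.sum_mul, ← Finset.mul_sum, hb1, mul_one]
  · rw [Finset.sum_comm]
    refine Finset.sum_congr rfl fun k _ => Finset.sum_congr rfl fun j _ => ?_
    ring
end

section
/- Let s, m ≥ 1 and K ≥ 0 be integers, let A^S ∈ ℝ^{s×s}, c^S, δc ∈ ℝ^s, Ψ^0, …, Ψ^K, Γ^0, …, Γ^K ∈ ℝ^{s×s}, let L ∈ ℝ^{s×s} be the lower shift matrix, and let δC ∈ ℝ^{s×s} be the lower triangular matrix with (δC)_{i,j} = δc_j for j ≤ i and 0 otherwise. Let b ∈ ℝ^m, A ∈ ℝ^{m×m}, c ∈ ℝ^m satisfy bᵀ𝟙_m = 1, A𝟙_m = c, bᵀc = 1/2, bᵀ A c^{×k} = ζ_k = 1/((k+1)(k+2)) and bᵀ A A c^{×k} = ξ_k = 1/((k+1)(k+2)(k+3)) for all 0 ≤ k ≤ K. Then (δc ⊗ b)ᵀ ( (L δC) ⊗ (𝟙_m bᵀ) + diag(δc) ⊗ A ) ( (L A^S c^S) ⊗ 𝟙_m + Σ_{k=0}^K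 ((Ψ^k + Γ^k) c^S) ⊗ (A c^{×k}) ) = δcᵀ L δC ( L A^S + Σ_{k=0}^K ζ_k (Ψ^k + Γ^k) ) c^S + (δc^{×2})ᵀ ( (1/2) L A^S + Σ_{k=0}^K ξ_k (Ψ^k + Γ^k) ) c^S. (This identity establishes the fourth order coupling condition bᶠᵀ Aᶠᶠ Aᶠˢ cˢ = 1/24 of internal stage predictor-corrector MRI-GARK methods.) -/
open Matrix Kronecker

lemma aux_dot {s m : ℕ} (u x : Fin s → ℝ) (v y : Fin m → ℝ) :
    (fun p : Fin s × Fin m => u p.1 * v p.2) ⬝ᵥ (fun p : Fin s × Fin m => x p.1 * y p.2)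
      = (u ⬝ᵥ x) * (v ⬝ᵥ y) := by
  simp only [dotProduct, Fintype.sum_prod_type, Finset.sum_mul_sum]
  refine Finset.sum_congr rfl fun i _ => Finset.sum_congr rfl fun j _ => ?_
  ring

lemma aux_mulVec {s m : ℕ} (B : Matrix (Fin s) (Fin s) ℝ) (C : Matrix (Fin m) (Fin m) ℝ)
    (x : Fin s → ℝ) (y : Fin m → ℝ) :
    (B ⊗ₖ C).mulVec (fun p : Fin s × Fin m => x p.1 * y p.2)
      = fun p : Fin s × Fin m => (B.mulVec x) p.1 * (C.mulVec y) p.2 := by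
  funext p
  exact aux_dot (B p.1) x (C p.2) y

lemma aux_term {s m : ℕ} (M : Matrix (Fin s) (Fin s) ℝ) (δc : Fin s → ℝ)
    (b : Fin m → ℝ) (A : Matrix (Fin m) (Fin m) ℝ)
    (hb1 : b ⬝ᵥ (fun _ => (1 : ℝ)) = 1) (x : Fin s → ℝ) (y : Fin m → ℝ) :
    (fun p : Fin s × Fin m => δc p.1 * b p.2) ⬝ᵥ
      ((M ⊗ₖ vecMulVec (fun _ => (1 : ℝ)) b + Matrix.diagonal δc ⊗ₖ A).mulVec
        (fun p : Fin s × Fin m => x p.1 * y p.2))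
    = (b ⬝ᵥ y) * (δc ⬝ᵥ M.mulVec x) + (b ⬝ᵥ A.mulVec y) * ((fun i => δc i ^ 2) ⬝ᵥ x) := by
  have h1 : (vecMulVec (fun _ => (1 : ℝ)) b).mulVec y = (b ⬝ᵥ y) • (fun _ : Fin m => (1 : ℝ)) := by
    funext i
    simp [mulVec, vecMulVec, dotProduct]
  have h2 : δc ⬝ᵥ (Matrix.diagonal δc).mulVec x = (fun i => δc i ^ 2) ⬝ᵥ x := by
    simp only [dotProduct, mulVec_diagonal]
    refine Finset.sum_congr rfl fun i _ => ?_
    ring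
  rw [add_mulVec, dotProduct_add, aux_mulVec, aux_mulVec, aux_dot, aux_dot, h1, h2,
    dotProduct_smul, hb1, smul_eq_mul]
  ring

/-- Identity establishing the fourth order coupling condition
bᶠᵀ Aᶠᶠ Aᶠˢ cˢ = 1/24 of internal stage predictor-corrector MRI-GARK methods. -/
theorem stmt_17 (s m K : ℕ) (hs : 1 ≤ s) (hm : 1 ≤ m)
    (AS : Matrix (Fin s) (Fin s) ℝ) (cS δc : Fin s → ℝ)
    (Ψ Γ : Fin (K + 1) → Matrix (Fin s) (Fin s) ℝ)
    (L : Matrix (Fin s) (Fin s) ℝ)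
    (hL : ∀ i j : Fin s, L i j = if (i : ℕ) = (j : ℕ) + 1 then 1 else 0)
    (δC : Matrix (Fin s) (Fin s) ℝ)
    (hδC : ∀ i j : Fin s, δC i j = if j ≤ i then δc j else 0)
    (b : Fin m → ℝ) (A : Matrix (Fin m) (Fin m) ℝ) (c : Fin m → ℝ)
    (hb1 : b ⬝ᵥ (fun _ => (1 : ℝ)) = 1)
    (hA1 : A.mulVec (fun _ => (1 : ℝ)) = c)
    (hbc : b ⬝ᵥ c = 1 / 2)
    (hbA : ∀ k : Fin (K + 1), b ⬝ᵥ A.mulVec (fun i => c i ^ (k : ℕ)) =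
      1 / ((((k : ℕ) : ℝ) + 1) * (((k : ℕ) : ℝ) + 2)))
    (hbAA : ∀ k : Fin (K + 1), b ⬝ᵥ A.mulVec (A.mulVec (fun i => c i ^ (k : ℕ))) =
      1 / ((((k : ℕ) : ℝ) + 1) * (((k : ℕ) : ℝ) + 2) * (((k : ℕ) : ℝ) + 3))) :
    (fun p : Fin s × Fin m => δc p.1 * b p.2) ⬝ᵥ
      (((L * δC) ⊗ₖ vecMulVec (fun _ => (1 : ℝ)) b + Matrix.diagonal δc ⊗ₖ A).mulVec
        (fun p : Fin s × Fin m =>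
          (L.mulVec (AS.mulVec cS)) p.1 * 1
          + ∑ k : Fin (K + 1), ((Ψ k + Γ k).mulVec cS) p.1 *
              (A.mulVec (fun i => c i ^ (k : ℕ))) p.2))
    = δc ⬝ᵥ ((L * δC * (L * AS + ∑ k : Fin (K + 1),
          (1 / ((((k : ℕ) : ℝ) + 1) * (((k : ℕ) : ℝ) + 2))) • (Ψ k + Γ k))).mulVec cS)
      + (fun i => δc i ^ 2) ⬝ᵥ (((1 / 2 : ℝ) • (L * AS) + ∑ k : Fin (K + 1),
          (1 / ((((k : ℕ) : ℝ) + 1) * (((k : ℕ) : ℝ) + 2) * (((k : ℕ) : ℝ) + 3))) •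
            (Ψ k + Γ k)).mulVec cS) := by
  have hv : (fun p : Fin s × Fin m =>
          (L.mulVec (AS.mulVec cS)) p.1 * 1
          + ∑ k : Fin (K + 1), ((Ψ k + Γ k).mulVec cS) p.1 *
              (A.mulVec (fun i => c i ^ (k : ℕ))) p.2)
      = (fun p : Fin s × Fin m => (L.mulVec (AS.mulVec cS)) p.1 * (fun _ : Fin m => (1 : ℝ)) p.2)
        + ∑ k : Fin (K + 1), (fun p : Fin s × Fin m => ((Ψ k + Γ k).mulVec cS) p.1 *
              (A.mulVec (fun i => c i ^ (k : ℕ))) p.2) := by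
    funext p
    simp only [Pi.add_apply, Finset.sum_apply]
  rw [hv, mulVec_add, mulVec_sum, dotProduct_add, dotProduct_sum]
  refine (congrArg₂ (· + ·)
    (aux_term (L * δC) δc b A hb1 (L.mulVec (AS.mulVec cS)) (fun _ => (1 : ℝ)))
    (Finset.sum_congr rfl fun k _ => aux_term (L * δC) δc b A hb1 ((Ψ k + Γ k).mulVec cS)
      (A.mulVec (fun i => c i ^ (k : ℕ))))).trans ?_
  simp only [hbA, hbAA]
  rw [hb1, hA1, hbc]
  simp only [← mulVec_mulVec, add_mulVec, sum_mulVec, smul_mulVec, mulVec_add, mulVec_sum,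
    mulVec_smul, dotProduct_add, dotProduct_sum, dotProduct_smul, smul_eq_mul,
    Finset.sum_add_distrib]
  ring
end

section
/- Let s, m ≥ 1 and K ≥ 0 be integers, let A^S ∈ ℝ^{s×s} with diagonal part D and strictly lower triangular part T, let c^S, δc ∈ ℝ^s, let Ψ^0, …, Ψ^K, Γ^0, …, Γ^K ∈ ℝ^{s×s}, and let L ∈ ℝ^{s×s} be the lower shift matrix. Let b ∈ ℝ^m, A ∈ ℝ^{m×m}, c ∈ ℝ^m satisfy bᵀ𝟙_m = 1 and bᵀ A c^{×k} = ζ_k = 1/((k+1)(k+2)) for all 0 ≤ k ≤ K. Then (δc ⊗ b)ᵀ [ ( (L D) ⊗ 𝟙_m + Σ_{k=0}^K Ψ^k ⊗ (A c^{×k}) ) (A^S c^S) + (1/2) ( (L T) ⊗ 𝟙_m + Σ_{k=0}^K Γ^k ⊗ (A c^{×k}) ) c^{S×2} ] = δcᵀ ( L D + Σ_{k=0}^K ζ_k Ψ^k ) A^S c^S + (1/2) δcᵀ ( L T + Σ_{k=0}^K ζ_k Γ^k ) c^{S×2}. (This identity establishes the fourth order coupling condition bᶠᵀ Aᶠˢ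 Aˢᶠ cᶠ = 1/24 of internal stage predictor-corrector MRI-GARK methods.) -/
open Matrix

/-- Kronecker product of an s×s matrix with a column vector in ℝ^m,
yielding an (sm)×s matrix. -/
def kronMV {s m : ℕ} (M : Matrix (Fin s) (Fin s) ℝ) (v : Fin m → ℝ) :
    Matrix (Fin s × Fin m) (Fin s) ℝ :=
  Matrix.of fun p j => M p.1 j * v p.2

theorem kron_aux {s m : ℕ} (M : Matrix (Fin s) (Fin s) ℝ) (v b : Fin m → ℝ)
    (δ x : Fin s → ℝ) :
    (fun p : Fin s × Fin m => δ p.1 * b p.2) ⬝ᵥ ((kronMV M v).mulVec x)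
      = (b ⬝ᵥ v) * (δ ⬝ᵥ M.mulVec x) := by
  have h : ∀ p : Fin s × Fin m, (kronMV M v).mulVec x p = M.mulVec x p.1 * v p.2 := by
    intro p
    simp only [kronMV, Matrix.mulVec, dotProduct, Matrix.of_apply, Finset.sum_mul]
    exact Finset.sum_congr rfl fun _ _ => by ring
  simp only [dotProduct, h]
  rw [Fintype.sum_prod_type, mul_comm, Finset.sum_mul_sum]
  exact Finset.sum_congr rfl fun _ _ => Finset.sum_congr rfl fun _ _ => by ring

theorem sum_aux {s m K : ℕ} (N : Matrix (Fin s) (Fin s) ℝ)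
    (Ψ : Fin (K + 1) → Matrix (Fin s) (Fin s) ℝ) (v : Fin (K + 1) → Fin m → ℝ)
    (ζ : Fin (K + 1) → ℝ) (b : Fin m → ℝ) (δ x : Fin s → ℝ)
    (hb1 : b ⬝ᵥ (fun _ => (1 : ℝ)) = 1) (hv : ∀ k, b ⬝ᵥ v k = ζ k) :
    (fun p : Fin s × Fin m => δ p.1 * b p.2) ⬝ᵥ
      ((kronMV N (fun _ => (1 : ℝ)) + ∑ k, kronMV (Ψ k) (v k)).mulVec x)
      = δ ⬝ᵥ ((N + ∑ k, ζ k • Ψ k).mulVec x) := by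
  rw [Matrix.add_mulVec, Matrix.add_mulVec, dotProduct_add, dotProduct_add, kron_aux, hb1,
    one_mul, Matrix.sum_mulVec, Matrix.sum_mulVec, dotProduct_sum, dotProduct_sum]
  congr 1
  refine Finset.sum_congr rfl fun k _ => ?_
  rw [kron_aux, hv, Matrix.smul_mulVec, dotProduct_smul, smul_eq_mul]

/-- Identity establishing the fourth order coupling condition
bᶠᵀ Aᶠˢ Aˢᶠ cᶠ = 1/24 of internal stage predictor-corrector MRI-GARK methods. -/
theorem stmt_18 (s m K : ℕ) (hs : 1 ≤ s) (hm : 1 ≤ m)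
    (AS D T : Matrix (Fin s) (Fin s) ℝ)
    (hD : ∀ i j : Fin s, D i j = if i = j then AS i j else 0)
    (hT : ∀ i j : Fin s, T i j = if j < i then AS i j else 0)
    (cS δc : Fin s → ℝ)
    (Ψ Γ : Fin (K + 1) → Matrix (Fin s) (Fin s) ℝ)
    (L : Matrix (Fin s) (Fin s) ℝ)
    (hL : ∀ i j : Fin s, L i j = if (i : ℕ) = (j : ℕ) + 1 then 1 else 0)
    (b : Fin m → ℝ) (A : Matrix (Fin m) (Fin m) ℝ) (c : Fin m → ℝ)
    (hb1 : b ⬝ᵥ (fun _ => (1 : ℝ)) = 1)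
    (hbA : ∀ k : Fin (K + 1), b ⬝ᵥ A.mulVec (fun i => c i ^ (k : ℕ)) =
      1 / ((((k : ℕ) : ℝ) + 1) * (((k : ℕ) : ℝ) + 2))) :
    (fun p : Fin s × Fin m => δc p.1 * b p.2) ⬝ᵥ
      ((kronMV (L * D) (fun _ => (1 : ℝ)) + ∑ k : Fin (K + 1),
          kronMV (Ψ k) (A.mulVec (fun i => c i ^ (k : ℕ)))).mulVec (AS.mulVec cS)
        + (1 / 2 : ℝ) •
          (kronMV (L * T) (fun _ => (1 : ℝ)) + ∑ k : Fin (K + 1),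
            kronMV (Γ k) (A.mulVec (fun i => c i ^ (k : ℕ)))).mulVec
              (fun i => cS i ^ 2))
    = δc ⬝ᵥ ((L * D + ∑ k : Fin (K + 1),
          (1 / ((((k : ℕ) : ℝ) + 1) * (((k : ℕ) : ℝ) + 2))) • Ψ k).mulVec
            (AS.mulVec cS))
      + (1 / 2 : ℝ) * (δc ⬝ᵥ ((L * T + ∑ k : Fin (K + 1),
          (1 / ((((k : ℕ) : ℝ) + 1) * (((k : ℕ) : ℝ) + 2))) • Γ k).mulVec
            (fun i => cS i ^ 2))) := by
  rw [dotProduct_add, dotProduct_smul, smul_eq_mul]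
  congr 1
  · exact sum_aux _ Ψ _ _ b δc _ hb1 hbA
  · congr 1
    exact sum_aux _ Γ _ _ b δc _ hb1 hbA
end
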